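/- Let D be a simple diagram of height d ≥ 1. Let f be the number of facial nodes of D, e the number of edge-nodes of D, and c the number of corner-nodes of D that are not bottom-corner nodes. Then 2f + e + c ≥ d + 1. -/

import Mathlib

/-!
The proof is a discrete integration by parts. Read `P, 0, N` as `1, 0, -1`, and for a row with
entries `u i` put `A(u) = ∑ |u i + u (i+1)|`. If `v` is the row above `u`, indexed so that the
point carrying `v (i+1)` has the two points carrying `u i` and `u (i+1)` below it, then summation
by parts gives
`∑ u i * (v i + v (i+1)) = ∑ v (i+1) * (u i + u (i+1))`.
The left side is at most `A(v)`, since `|u i| ≤ 1`. The right side falls short of `A(u)` only at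
nodes, by at most `4` at a facial node and by at most `2` at an edge-node or a top-corner; so
with weight `2` for facial nodes and `1` for the others, the shortfall is at most twice the total
weight of the nodes of the upper row. This gives `A(u) ≤ 2 * weight + A(v)`.

If `u` is nonzero, each of its two ends contributes `1` more: over an end of `u`, either `v` is
nonzero and the neighbouring term of `A(v)` is not used up, or `v` vanishes at a top-corner, where
the shortfall is only `1` out of the allowed `2`. This needs that `v` vanishes wherever both
entries below do, which holds because simplicity forbids bottom-corners above a nonzero row. Hence
`A(u) + 2 ≤ 2 * weight + A(v)` for each nonzero `u` (`row_step`). Moreover `A(v) ≥ 2` for the lowest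
nonzero row `v`. Telescoping over all rows gives `2 * (d + 1) ≤ 2 * (2f + e + c)`.
-/


/-- `down_k`: subtract `1` from the `k`-th entry. -/
def downk {n : ℕ} (k : Fin n) (α : Fin n → ℤ) : Fin n → ℤ :=
  Function.update α k (α k - 1)

/-- A sink of a diagram `D : ℤⁿ → {P,0,N}`. -/
def IsSink {n : ℕ} (D : (Fin n → ℤ) → SignType) (α : Fin n → ℤ) : Prop :=
  D α ≤ 0 ∧ (∀ k, 0 ≤ D (downk k α)) ∧ (D α ≠ 0 ∨ ∃ k, D (downk k α) ≠ 0)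

/-- A source of a diagram `D : ℤⁿ → {P,0,N}`. -/
def IsSource {n : ℕ} (D : (Fin n → ℤ) → SignType) (α : Fin n → ℤ) : Prop :=
  0 ≤ D α ∧ (∀ k, D (downk k α) ≤ 0) ∧ (D α ≠ 0 ∨ ∃ k, D (downk k α) ≠ 0)

/-- A node: a sink or a source. -/
def IsNode {n : ℕ} (D : (Fin n → ℤ) → SignType) (α : Fin n → ℤ) : Prop :=
  IsSink D α ∨ IsSource D α

/-- A bottom-corner of a 2-dimensional diagram. -/
def IsBottomCorner (D : (Fin 2 → ℤ) → SignType) (α : Fin 2 → ℤ) : Prop :=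
  D α ≠ 0 ∧ ∀ k, D (downk k α) = 0

/-- A top-corner of a 2-dimensional diagram. -/
def IsTopCorner (D : (Fin 2 → ℤ) → SignType) (α : Fin 2 → ℤ) : Prop :=
  D α = 0 ∧ ∃! k, D (downk k α) ≠ 0

/-- A point on a horizontal edge of a 2-dimensional diagram. -/
def OnHorizEdge (D : (Fin 2 → ℤ) → SignType) (α : Fin 2 → ℤ) : Prop :=
  D α = 0 ∧ ∀ k, D (downk k α) ≠ 0

/-- A point on a vertical edge of a 2-dimensional diagram. -/
def OnVertEdge (D : (Fin 2 → ℤ) → SignType) (α : Fin 2 → ℤ) : Prop :=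
  D α ≠ 0 ∧ ∃! k, D (downk k α) ≠ 0

/-- A facial point of a 2-dimensional diagram. -/
def IsFacial (D : (Fin 2 → ℤ) → SignType) (α : Fin 2 → ℤ) : Prop :=
  D α ≠ 0 ∧ ∀ k, D (downk k α) ≠ 0

/-- A simple diagram: a 2-dimensional diagram all of whose bottom-corner nodes
lie in the lowest nonzero row. -/
def IsSimple (D : (Fin 2 → ℤ) → SignType) : Prop :=
  ∀ α : Fin 2 → ℤ, IsNode D α → IsBottomCorner D α →
    ∀ β : Fin 2 → ℤ, D β ≠ 0 → α 0 + α 1 ≤ β 0 + β 1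

/-- The height of a 2-dimensional diagram: the number of its nonzero rows. -/
noncomputable def height (D : (Fin 2 → ℤ) → SignType) : ℕ :=
  Set.ncard {r : ℤ | ∃ α : Fin 2 → ℤ, D α ≠ 0 ∧ α 0 + α 1 = r}

/-! ### One pair of consecutive rows -/

/-- The first and the last nonzero entry of a nonzero sequence that vanishes at `0` and from `N`
on. The first one is written `a + 1`, so that `a` is a zero entry. -/
lemma exists_ends (N : ℕ) (u : ℕ → ℤ) (u0 : u 0 = 0) (uN : ∀ i, N ≤ i → u i = 0)
    (hu : ∃ i, u i ≠ 0) :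
    ∃ a b, a < b ∧ b < N ∧ u (a + 1) ≠ 0 ∧ u b ≠ 0 ∧ (∀ i, i ≤ a → u i = 0) ∧
      ∀ i, b < i → u i = 0 := by
  classical
  have ha := Nat.find_spec hu
  have ham : ∀ i, i < Nat.find hu → u i = 0 := fun i hi => by
    simpa using Nat.find_min hu hi
  set a := Nat.find hu
  have hapos : a ≠ 0 := by
    intro h
    rw [h] at ha
    exact ha u0
  have haN : a ≤ N := by
    by_contra h
    exact ha (uN a (by omega))
  have hb := Nat.findGreatest_spec (P := fun i => u i ≠ 0) haN ha
  have hab := Nat.le_findGreatest (P := fun i => u i ≠ 0) haN ha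
  have hbN := Nat.findGreatest_le (P := fun i => u i ≠ 0) N
  have hbm : ∀ i, Nat.findGreatest (fun i => u i ≠ 0) N < i → u i = 0 := by
    intro i hi
    by_cases h : i ≤ N
    · simpa using Nat.findGreatest_is_greatest hi h
    · exact uN i (by omega)
  set b := Nat.findGreatest (fun i => u i ≠ 0) N
  have hbN' : b ≠ N := by
    intro h
    exact hb (uN b (by omega))
  refine ⟨a - 1, b, by omega, by omega, ?_, hb, fun i hi => ham i (by omega), hbm⟩
  rwa [Nat.sub_add_cancel (by omega)]

/-- The quantity `A(u)`: up to alternating signs, the total variation of the row `u`. -/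
def rowVar (N : ℕ) (u : ℕ → ℤ) : ℤ := ∑ i ∈ Finset.range N, |u i + u (i + 1)|

lemma rowVar_nonneg (N : ℕ) (u : ℕ → ℤ) : 0 ≤ rowVar N u :=
  Finset.sum_nonneg fun _ _ => abs_nonneg _

lemma two_le_rowVar (N : ℕ) (u : ℕ → ℤ) (u0 : u 0 = 0) (uN : ∀ i, N ≤ i → u i = 0)
    (hu : ∃ i, u i ≠ 0) : 2 ≤ rowVar N u := by
  obtain ⟨a, b, hab, hbN, ha, hb, hla, hlb⟩ := exists_ends N u u0 uN hu
  have hsub : ({a, b} : Finset ℕ) ⊆ Finset.range N := by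
    intro i hi
    simp only [Finset.mem_insert, Finset.mem_singleton] at hi
    simp only [Finset.mem_range]
    omega
  have h := Finset.sum_le_sum_of_subset_of_nonneg (f := fun i => |u i + u (i + 1)|) hsub
    (fun _ _ _ => abs_nonneg _)
  rw [Finset.sum_pair (by omega)] at h
  have h1 : u a = 0 := hla a le_rfl
  have h2 : u (b + 1) = 0 := hlb _ (by omega)
  simp only [h1, h2, zero_add, add_zero] at h
  have h3 := Int.one_le_abs ha
  have h4 := Int.one_le_abs hb
  unfold rowVar
  linarith

/-- The basic inequality between a nonzero row `u` and the row `v` above it. Here `w (i + 1)` is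
the weight of the point carrying `v (i + 1)`; the hypotheses `hP` and `hP'` are all that is used
about these weights. -/
lemma row_step (N : ℕ) (u v w : ℕ → ℤ) (u0 : u 0 = 0) (v0 : v 0 = 0)
    (uN : ∀ i, N ≤ i + 1 → u i = 0) (hu1 : ∀ i, |u i| ≤ 1)
    (hv : ∀ i, u i = 0 → u (i + 1) = 0 → v (i + 1) = 0)
    (hP : ∀ i, |u i + u (i + 1)| ≤ v (i + 1) * (u i + u (i + 1)) + 2 * w (i + 1))
    (hP' : ∀ i, (u i = 0 ∧ u (i + 1) ≠ 0 ∨ u i ≠ 0 ∧ u (i + 1) = 0) →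
      |u i + u (i + 1)| + 1 ≤ v (i + 1) * (u i + u (i + 1)) + 2 * w (i + 1) + |v (i + 1)|)
    (hu : ∃ i, u i ≠ 0) :
    rowVar N u + 2 ≤ 2 * ∑ i ∈ Finset.range N, w (i + 1) + rowVar N v := by
  obtain ⟨a, b, hab, hbN, ha, hb, hla, hlb⟩ := exists_ends (N - 1) u u0 (fun i hi => uN i (by omega)) hu
  have hparts : ∑ i ∈ Finset.range N, (u (i + 1) * v (i + 1) - u i * v i) = 0 := by
    rw [Finset.sum_range_sub (fun i => u i * v i), uN N (by omega), u0]
    ring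
  -- the term of index `i` in `2 * weight + A(v) - A(u)`, after subtracting a telescoping term
  let E : ℕ → ℤ := fun i =>
    (v (i + 1) * (u i + u (i + 1)) + 2 * w (i + 1) - |u i + u (i + 1)|)
      + (|v i + v (i + 1)| - u i * (v i + v (i + 1)))
  have hE : ∑ i ∈ Finset.range N, E i
      = 2 * ∑ i ∈ Finset.range N, w (i + 1) + rowVar N v - rowVar N u := by
    have : ∀ i, E i = (u (i + 1) * v (i + 1) - u i * v i)
        + (2 * w (i + 1) + |v i + v (i + 1)| - |u i + u (i + 1)|) := by
      intro i
      simp only [E]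
      ring
    simp only [this]
    rw [Finset.sum_add_distrib, hparts, Finset.sum_sub_distrib, Finset.sum_add_distrib,
      ← Finset.mul_sum]
    simp only [rowVar]
    ring
  have hQ : ∀ i, 0 ≤ |v i + v (i + 1)| - u i * (v i + v (i + 1)) := by
    intro i
    have h1 : u i * (v i + v (i + 1)) ≤ |u i| * |v i + v (i + 1)| := by
      rw [← abs_mul]
      exact le_abs_self _
    have h2 := mul_le_mul_of_nonneg_right (hu1 i) (abs_nonneg (v i + v (i + 1)))
    linarith
  have hE0 : ∀ i, 0 ≤ E i := fun i => add_nonneg (by linarith [hP i]) (hQ i)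
  have va : v a = 0 := by
    cases a with
    | zero => exact v0
    | succ k => exact hv k (hla k (by omega)) (hla _ le_rfl)
  have vb : v (b + 2) = 0 := hv (b + 1) (hlb _ (by omega)) (hlb _ (by omega))
  have ua : u a = 0 := hla a le_rfl
  have ub : u (b + 1) = 0 := hlb _ (by omega)
  have e1 : 1 ≤ E a := by
    have h := hP' a (Or.inl ⟨ua, ha⟩)
    simp only [E, va, ua, zero_add, zero_mul, sub_zero] at h ⊢
    linarith
  -- the gain at the last end is shared between the terms of index `b` and `b + 1`
  have e2 : 1 - |v (b + 1)| ≤ E b := by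
    have h := hP' b (Or.inr ⟨hb, ub⟩)
    have h2 := hQ b
    simp only [E]
    linarith
  have e3 : |v (b + 1)| ≤ E (b + 1) := by
    have h := hP (b + 1)
    have vb' : v (b + 1 + 1) = 0 := vb
    simp only [E, vb', ub, add_zero, zero_mul, sub_zero] at h ⊢
    linarith
  have hsub : ({a, b, b + 1} : Finset ℕ) ⊆ Finset.range N := by
    intro i hi
    simp only [Finset.mem_insert, Finset.mem_singleton] at hi
    simp only [Finset.mem_range]
    omega
  have h := Finset.sum_le_sum_of_subset_of_nonneg (f := E) hsub (fun i _ _ => hE0 i)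
  rw [Finset.sum_insert (by simp; omega), Finset.sum_pair (by omega), hE] at h
  linarith

/-! ### Weights of nodes -/

open Classical in
/-- The contribution of a point to `2f + e + c`. -/
noncomputable def nodeWeight (D : (Fin 2 → ℤ) → SignType) (α : Fin 2 → ℤ) : ℤ :=
  2 * (if IsNode D α ∧ IsFacial D α then 1 else 0)
    + (if IsNode D α ∧ (OnHorizEdge D α ∨ OnVertEdge D α) then 1 else 0)
    + (if IsNode D α ∧ IsTopCorner D α then 1 else 0)

lemma nodeWeight_nonneg (D : (Fin 2 → ℤ) → SignType) (α : Fin 2 → ℤ) : 0 ≤ nodeWeight D α := by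
  unfold nodeWeight
  positivity

lemma existsUnique_fin_two (p : Fin 2 → Prop) :
    (∃! k, p k) ↔ (p 0 ∧ ¬ p 1) ∨ (¬ p 0 ∧ p 1) := by
  simp only [ExistsUnique, Fin.exists_fin_two, Fin.forall_fin_two]
  by_cases h0 : p 0 <;> by_cases h1 : p 1 <;> simp [h0, h1]

/-- The hypotheses `hP` and `hP'` of `row_step` at one point, checked on all `27` sign patterns. -/
lemma weight_bound (D : (Fin 2 → ℤ) → SignType) (α : Fin 2 → ℤ) (x y z : SignType)
    (hx : D (downk 0 α) = x) (hy : D (downk 1 α) = y) (hz : D α = z) :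
    |(x : ℤ) + y| ≤ z * ((x : ℤ) + y) + 2 * nodeWeight D α ∧
    (((x : ℤ) = 0 ∧ (y : ℤ) ≠ 0 ∨ (x : ℤ) ≠ 0 ∧ (y : ℤ) = 0) →
      |(x : ℤ) + y| + 1 ≤ z * ((x : ℤ) + y) + 2 * nodeWeight D α + |(z : ℤ)|) := by
  simp only [nodeWeight, IsNode, IsSink, IsSource, IsFacial, OnHorizEdge, OnVertEdge, IsTopCorner,
    existsUnique_fin_two, Fin.forall_fin_two, Fin.exists_fin_two, hx, hy, hz]
  cases x <;> cases y <;> cases z <;> simp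

/-! ### Rows of the diagram -/

/-- Coordinates on `ℤ²` adapted to rows: the point number `i` of the row `α 0 + α 1 = r - M`. -/
def rowPt (M r i : ℕ) : Fin 2 → ℤ := ![(i : ℤ) - M, (r : ℤ) - i]

lemma downk_zero_rowPt (M r i : ℕ) : downk 0 (rowPt M (r + 1) (i + 1)) = rowPt M r i := by
  ext k
  fin_cases k <;> simp [downk, rowPt]
  ring

lemma downk_one_rowPt (M r i : ℕ) : downk 1 (rowPt M (r + 1) (i + 1)) = rowPt M r (i + 1) := by
  ext k
  fin_cases k <;> simp [downk, rowPt] <;> ring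

lemma rowPt_inj {M r i r' i' : ℕ} (h : rowPt M r i = rowPt M r' i') : r = r' ∧ i = i' := by
  have h0 := congrFun h 0
  have h1 := congrFun h 1
  simp [rowPt] at h0 h1
  omega

open Classical in
lemma sum_indicator_le (M N : ℕ) (p : (Fin 2 → ℤ) → Prop) (hp : {α | p α}.Finite) :
    ∑ r ∈ Finset.range N, ∑ i ∈ Finset.range N,
      (if p (rowPt M (r + 1) (i + 1)) then (1 : ℤ) else 0) ≤ ({α | p α}.ncard : ℤ) := by
  rw [← Finset.sum_product', Finset.sum_boole, Set.ncard_eq_toFinset_card _ hp]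
  norm_cast
  refine Finset.card_le_card_of_injOn (fun q => rowPt M (q.1 + 1) (q.2 + 1)) ?_ ?_
  · intro q hq
    simpa using (Finset.mem_filter.1 hq).2
  · intro q _ q' _ h
    have := rowPt_inj h
    ext <;> omega

lemma downk_injective (k : Fin 2) : Function.Injective (downk (n := 2) k) := by
  intro α β h
  have h0 := congrFun h 0
  have h1 := congrFun h 1
  ext j
  fin_cases k <;> fin_cases j <;> simp [downk] at h0 h1 ⊢ <;> omega

lemma finite_nodes (D : (Fin 2 → ℤ) → SignType) (hfin : (Function.support D).Finite) :
    {α | IsNode D α}.Finite := by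
  refine (hfin.union ((hfin.preimage (downk_injective 0).injOn).union
    (hfin.preimage (downk_injective 1).injOn))).subset ?_
  rintro α (h | h) <;>
  · have := h.2.2
    rw [Fin.exists_fin_two] at this
    simpa using this

lemma exists_bound (D : (Fin 2 → ℤ) → SignType) (hfin : (Function.support D).Finite) :
    ∃ M : ℕ, ∀ α, D α ≠ 0 → |α 0| + |α 1| < M := by
  obtain ⟨B, hB⟩ := (hfin.image (fun α => |α 0| + |α 1|)).bddAbove
  refine ⟨(B + 1).toNat, fun α hα => ?_⟩
  have h := hB ⟨α, hα, rfl⟩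
  have := Int.self_le_toNat (B + 1)
  simp only at h
  omega

/-- for a simple diagram of height `d ≥ 1`, with `f` facial
nodes, `e` edge-nodes, and `c` corner-nodes that are not bottom-corner nodes,
one has `2f + e + c ≥ d + 1`. -/
theorem stmt12 (D : (Fin 2 → ℤ) → SignType)
    (hfin : (Function.support D).Finite) (hsimple : IsSimple D)
    (d : ℕ) (hd : 1 ≤ d) (hheight : height D = d) :
    d + 1 ≤ 2 * Set.ncard {α : Fin 2 → ℤ | IsNode D α ∧ IsFacial D α}
      + Set.ncard {α : Fin 2 → ℤ | IsNode D α ∧ (OnHorizEdge D α ∨ OnVertEdge D α)}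
      + Set.ncard {α : Fin 2 → ℤ | IsNode D α ∧ IsTopCorner D α} := by
  classical
  obtain ⟨M, hM⟩ := exists_bound D hfin
  -- all nonzero entries have row and position strictly between `0` and `2 * M`
  set N := 2 * M + 1 with hN
  let x : ℕ → ℕ → ℤ := fun r i => (D (rowPt M r i) : ℤ)
  let w : ℕ → ℕ → ℤ := fun r i => nodeWeight D (rowPt M r i)
  have hx0 : ∀ r i, x r i = 0 ↔ D (rowPt M r i) = 0 := by
    intro r i
    change ((D (rowPt M r i) : SignType) : ℤ) = 0 ↔ _
    cases D (rowPt M r i) <;> simp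
  have hxM : ∀ r i, x r i ≠ 0 → 1 ≤ r ∧ r < 2 * M ∧ 1 ≤ i ∧ i < 2 * M := by
    intro r i h
    have h := hM _ (fun h' => h ((hx0 r i).2 h'))
    simp [rowPt] at h
    rcases abs_cases ((i : ℤ) - M) with h1 | h1 <;>
      rcases abs_cases ((r : ℤ) - i) with h2 | h2 <;> omega
  have hxi0 : ∀ r, x r 0 = 0 := fun r => by
    by_contra h
    have := hxM _ _ h
    omega
  have hxiN : ∀ r i, N ≤ i + 1 → x r i = 0 := fun r i hi => by
    by_contra h
    have := hxM _ _ h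
    omega
  have hx1 : ∀ r i, |x r i| ≤ 1 := by
    intro r i
    change |((D (rowPt M r i) : SignType) : ℤ)| ≤ 1
    cases D (rowPt M r i) <;> simp
  have hpt : ∀ α, D α ≠ 0 → ∃ r i, rowPt M r i = α := by
    intro α hα
    have h := hM α hα
    refine ⟨(α 0 + α 1 + M).toNat, (α 0 + M).toNat, ?_⟩
    rcases abs_cases (α 0) with h1 | h1 <;> rcases abs_cases (α 1) with h2 | h2 <;>
    · ext k
      fin_cases k <;> simp [rowPt] <;> omega
  have hW0 : ∀ r, 0 ≤ ∑ i ∈ Finset.range N, w r (i + 1) := fun r =>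
    Finset.sum_nonneg fun _ _ => nodeWeight_nonneg _ _
  have hstep : ∀ r, (∃ i, x r i ≠ 0) →
      rowVar N (x r) + 2
        ≤ 2 * ∑ i ∈ Finset.range N, w (r + 1) (i + 1) + rowVar N (x (r + 1)) := by
    intro r hr
    have hwb := fun i => weight_bound D (rowPt M (r + 1) (i + 1)) _ _ _
      (by rw [downk_zero_rowPt]) (by rw [downk_one_rowPt]) rfl
    refine row_step N (x r) (x (r + 1)) (w (r + 1)) (hxi0 r) (hxi0 _) (hxiN r) (hx1 r) ?_
      (fun i => (hwb i).1) (fun i => (hwb i).2) hr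
    -- a nonzero entry over two zeros is a bottom-corner node lying above the nonzero row `r`
    intro i h1 h2
    by_contra h3
    rw [hx0] at h1 h2 h3
    have hbc : IsBottomCorner D (rowPt M (r + 1) (i + 1)) := by
      refine ⟨h3, Fin.forall_fin_two.2 ⟨?_, ?_⟩⟩
      · rwa [downk_zero_rowPt]
      · rwa [downk_one_rowPt]
    have hnode : IsNode D (rowPt M (r + 1) (i + 1)) := by
      rcases le_total (D (rowPt M (r + 1) (i + 1))) 0 with h | h
      · exact Or.inl ⟨h, fun k => (hbc.2 k).ge, Or.inl h3⟩
      · exact Or.inr ⟨h, fun k => (hbc.2 k).le, Or.inl h3⟩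
    obtain ⟨j, hj⟩ := hr
    have h := hsimple _ hnode hbc (rowPt M r j) (fun h => hj ((hx0 r j).2 h))
    simp [rowPt] at h
    omega
  have hzero : ∀ r, (¬ ∃ i, x r i ≠ 0) → rowVar N (x r) = 0 := by
    intro r hr
    push Not at hr
    simp [rowVar, hr]
  let T : Finset ℕ := (Finset.range N).filter fun r => ∃ i, x r i ≠ 0
  have hTd : d ≤ T.card := by
    rw [← hheight, height]
    have hsub : {r : ℤ | ∃ α : Fin 2 → ℤ, D α ≠ 0 ∧ α 0 + α 1 = r}
        ⊆ (T.image fun r : ℕ => (r : ℤ) - M : Finset ℤ) := by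
      rintro _ ⟨α, hα, rfl⟩
      obtain ⟨r, i, rfl⟩ := hpt α hα
      have hri : x r i ≠ 0 := fun h => hα ((hx0 r i).1 h)
      have := hxM r i hri
      simp only [Finset.coe_image, Set.mem_image, Finset.mem_coe, T, Finset.mem_filter,
        Finset.mem_range]
      refine ⟨r, ⟨by omega, i, hri⟩, ?_⟩
      simp [rowPt]
    refine (Set.ncard_le_ncard hsub (Finset.finite_toSet _)).trans ?_
    rw [Set.ncard_coe_finset]
    exact Finset.card_image_le
  have hTne : T.Nonempty := Finset.card_pos.1 (by omega)
  obtain ⟨r₀, hr₀, hmin⟩ : ∃ r ∈ T, ∀ s ∈ T, r ≤ s :=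
    ⟨T.min' hTne, T.min'_mem hTne, fun s hs => T.min'_le s hs⟩
  obtain ⟨hr₀N, hr₀x⟩ := Finset.mem_filter.1 hr₀
  have hr₀pos : 1 ≤ r₀ := by
    obtain ⟨i, hi⟩ := hr₀x
    exact (hxM _ _ hi).1
  have hnot : r₀ - 1 ∉ T := fun h => by
    have := hmin _ h
    omega
  -- the zero row just below the lowest nonzero row also gains `2`
  let T' : Finset ℕ := insert (r₀ - 1) T
  have hT' : (T'.card : ℤ) = T.card + 1 := by
    simp only [T', Finset.card_insert_of_notMem hnot]
    push_cast
    rfl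
  have hrow : ∀ r ∈ Finset.range N, (if r ∈ T' then (2 : ℤ) else 0)
      ≤ 2 * ∑ i ∈ Finset.range N, w (r + 1) (i + 1)
        + (rowVar N (x (r + 1)) - rowVar N (x r)) := by
    intro r hr
    by_cases hrx : ∃ i, x r i ≠ 0
    · have h := hstep r hrx
      split_ifs <;> linarith
    · have h0 := hzero r hrx
      have h1 := hW0 (r + 1)
      split_ifs with hmem
      · rcases Finset.mem_insert.1 hmem with h | h
        · have e : r + 1 = r₀ := by omega
          have := two_le_rowVar N (x r₀) (hxi0 _) (fun i hi => hxiN _ _ (by omega)) hr₀x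
          rw [e] at h1 ⊢
          linarith
        · exact absurd (Finset.mem_filter.1 h).2 hrx
      · linarith [rowVar_nonneg N (x (r + 1))]
  have hsum := Finset.sum_le_sum hrow
  rw [Finset.sum_add_distrib, Finset.sum_range_sub (fun r => rowVar N (x r)), ← Finset.mul_sum,
    ← Finset.sum_filter, Finset.sum_const] at hsum
  have hTfil : (Finset.range N).filter (· ∈ T') = T' := by
    ext r
    simp only [Finset.mem_filter, Finset.mem_range, and_iff_right_iff_imp]
    intro h
    have := Finset.mem_range.1 hr₀N
    rcases Finset.mem_insert.1 h with h | h
    · omega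
    · exact Finset.mem_range.1 (Finset.mem_filter.1 h).1
  have hN0 : rowVar N (x N) = 0 := hzero N (by
    rintro ⟨i, hi⟩
    have := hxM _ _ hi
    omega)
  rw [hTfil, hN0, nsmul_eq_mul, hT'] at hsum
  have h00 := rowVar_nonneg N (x 0)
  have hfn := finite_nodes D hfin
  have hF := sum_indicator_le M N (fun α => IsNode D α ∧ IsFacial D α)
    (hfn.subset fun _ h => h.1)
  have hEd := sum_indicator_le M N (fun α => IsNode D α ∧ (OnHorizEdge D α ∨ OnVertEdge D α))
    (hfn.subset fun _ h => h.1)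
  have hC := sum_indicator_le M N (fun α => IsNode D α ∧ IsTopCorner D α)
    (hfn.subset fun _ h => h.1)
  have hWs : ∑ r ∈ Finset.range N, ∑ i ∈ Finset.range N, w (r + 1) (i + 1) ≤
      2 * (Set.ncard {α : Fin 2 → ℤ | IsNode D α ∧ IsFacial D α} : ℤ)
      + Set.ncard {α : Fin 2 → ℤ | IsNode D α ∧ (OnHorizEdge D α ∨ OnVertEdge D α)}
      + Set.ncard {α : Fin 2 → ℤ | IsNode D α ∧ IsTopCorner D α} := by
    simp only [w, nodeWeight, Finset.sum_add_distrib, ← Finset.mul_sum]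
    -- `congr!` reconciles the decidability instances of the indicators
    refine add_le_add (add_le_add (mul_le_mul_of_nonneg_left ?_ (by norm_num)) ?_) ?_
    · refine (le_of_eq ?_).trans hF
      congr!
    · refine (le_of_eq ?_).trans hEd
      congr!
    · refine (le_of_eq ?_).trans hC
      congr!
  have hTd' : (d : ℤ) ≤ T.card := by exact_mod_cast hTd
  zify
  linarith
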